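/- arXiv:2410.10649 — 2 statements merged into one kernel-verified Lean document; each statement's English description precedes it below -/
import Mathlib

section
/- Let n ≥ 1 and let K ∈ ℝ^{n×n} be symmetric positive definite. For each i ∈ {2, …, n} fix a nonempty parent set pa(i) ⊆ {1, …, i−1}, and define b_i = (K_{pa(i),pa(i)})⁻¹ K_{pa(i),i} ∈ ℝ^{pa(i)} and d_i = K_{i,i} − (K_{pa(i),i})ᵀ (K_{pa(i),pa(i)})⁻¹ K_{pa(i),i}; set d₁ = K_{1,1}. Define the Vecchia covariance matrix K̂ ∈ ℝ^{n×n} recursively by K̂_{1,1} = K_{1,1} and, for l = 1, …, n−1: K̂_{l+1,j} = K̂_{j,l+1} = Σ_{p∈pa(l+1)} (b_{l+1})_p K̂_{p,j} for 1 ≤ j ≤ l, and K̂_{l+1,l+1} = Σ_{p,q∈pa(l+1)} (b_{l+1})_p (b_{l+1})_q K̂_{p,q} + d_{l+1}. Then d_i > 0 for all i, K̂ is symmetric positive definite, and for every f ∈ ℝⁿ: fᵀ K̂⁻¹ f = f₁²/d₁ + Σ_{i=2}^n (f_i − Σ_{p∈pa(i)} (b_i)_p f_p)² / d_i. -/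
open Matrix

noncomputable section

/-- The principal submatrix `K_{S,S}` of `K` indexed by a finite index set `S`. -/
def ksub {n : ℕ} (K : Matrix (Fin n) (Fin n) ℝ) (S : Finset (Fin n)) :
    Matrix {p // p ∈ S} {p // p ∈ S} ℝ :=
  Matrix.of fun p q => K p.1 q.1

/-- The conditional-mean weights `b_i = (K_{S,S})⁻¹ K_{S,i}` for the parent set `S`. -/
def bW {n : ℕ} (K : Matrix (Fin n) (Fin n) ℝ) (S : Finset (Fin n)) (i : Fin n) :
    {p // p ∈ S} → ℝ :=
  (ksub K S)⁻¹ *ᵥ fun p => K p.1 i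

/-- The conditional variance `d_i = K_{i,i} − K_{S,i}ᵀ (K_{S,S})⁻¹ K_{S,i}`. -/
def dCond {n : ℕ} (K : Matrix (Fin n) (Fin n) ℝ) (S : Finset (Fin n)) (i : Fin n) : ℝ :=
  K i i - (fun p : {p // p ∈ S} => K p.1 i) ⬝ᵥ ((ksub K S)⁻¹ *ᵥ fun p => K p.1 i)

/-!
Write `B` for the strictly lower triangular matrix of the weights `b_i` and `D` for the diagonal
matrix of the variances `d_i`. The off-diagonal part of the recursion says that `(1 - B) K̂` is
upper triangular; hence `(1 - B) K̂ (1 - B)ᵀ` is both upper triangular and symmetric, so it is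
diagonal, and the diagonal part of the recursion identifies it with `D`. As `1 - B` is invertible,
this congruence makes `K̂` positive definite as soon as `D` is, and it turns the quadratic form of
`K̂⁻¹` at `f` into that of `D⁻¹` at `(1 - B) f`. Finally `d_i > 0` because `d_i` is the Schur
complement of `K_{pa(i),pa(i)}` in the principal submatrix of `K` indexed by `pa(i) ∪ {i}`.
-/

open scoped ComplexOrder in
lemma posDef_schurComplement_of_posDef_fromBlocks {m n 𝕜 : Type*} [Fintype m]
    [DecidableEq m] [Finite n] [RCLike 𝕜] {A : Matrix m m 𝕜} {B : Matrix m n 𝕜} {D : Matrix n n 𝕜}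
    (h : (fromBlocks A B Bᴴ D).PosDef) :
    (D - Bᴴ * A⁻¹ * B).PosDef := by
  classical
  have := Fintype.ofFinite n
  have hA : A.PosDef := h.submatrix Sum.inl_injective
  let : Invertible A := hA.isUnit.invertible
  have hsemi : (D - Bᴴ * A⁻¹ * B).PosSemidef := (hA.fromBlocks₁₁ B D).mp h.posSemidef
  have hunit : IsUnit (D - Bᴴ * A⁻¹ * B) := by
    simpa only [invOf_eq_nonsing_inv] using isUnit_fromBlocks_iff_of_invertible₁₁.mp h.isUnit
  exact hsemi.posDef_iff_isUnit.mpr hunit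

lemma dotProduct_inv_mulVec_of_mul_mul_transpose_eq_diagonal {ι R : Type*} [Fintype ι]
    [DecidableEq ι] [Field R] {L M : Matrix ι ι R} {d : ι → R} (hL : IsUnit L) (hd : ∀ i, d i ≠ 0)
    (h : L * M * Lᵀ = diagonal d) (f : ι → R) :
    f ⬝ᵥ (M⁻¹ *ᵥ f) = ∑ i, (L *ᵥ f) i ^ 2 / d i := by
  have hdet : IsUnit L.det := (isUnit_iff_isUnit_det L).mp hL
  have hdiag : (diagonal d)⁻¹ = diagonal fun i => (d i)⁻¹ :=
    inv_eq_right_inv (by simp [diagonal_mul_diagonal, hd])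
  have hM : M⁻¹ = Lᵀ * (diagonal fun i => (d i)⁻¹) * L := by
    rw [← hdiag, ← h, Matrix.mul_inv_rev, Matrix.mul_inv_rev, ← Matrix.mul_assoc,
      mul_nonsing_inv _ (by rwa [det_transpose]), Matrix.one_mul, Matrix.mul_assoc,
      nonsing_inv_mul _ hdet, Matrix.mul_one]
  calc
    f ⬝ᵥ (M⁻¹ *ᵥ f) = (L *ᵥ f) ⬝ᵥ ((diagonal fun i => (d i)⁻¹) *ᵥ (L *ᵥ f)) := by
      rw [hM, ← mulVec_mulVec, ← mulVec_mulVec, dotProduct_mulVec, vecMul_transpose]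
    _ = ∑ i, (L *ᵥ f) i ^ 2 / d i := by
      simp only [dotProduct, mulVec_diagonal]
      exact Finset.sum_congr rfl fun i _ => by ring

/-- A square matrix is strictly lower triangular if it vanishes on and above the diagonal; this is
the shape of a matrix of weights on parents that precede their children. -/
def IsStrictlyLowerTriangular {ι R : Type*} [LE ι] [Zero R] (B : Matrix ι ι R) : Prop :=
  ∀ ⦃i j⦄, i ≤ j → B i j = 0

/-- `M` obeys the Vecchia recursion with weight matrix `B` and conditional variances `d`: row `i`
of `M` is, left of the diagonal, the `B i`-weighted combination of the rows of `M`, and its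
diagonal entry is the variance of that combination plus `d i`. -/
structure IsVecchiaCovariance {ι R : Type*} [LT ι] [Fintype ι] [NonUnitalNonAssocSemiring R]
    (B : Matrix ι ι R) (d : ι → R) (M : Matrix ι ι R) : Prop where
  isSymm : M.IsSymm
  apply_of_lt : ∀ ⦃i j⦄, j < i → M i j = (B * M) i j
  apply_self : ∀ i, M i i = (B * M * Bᵀ) i i + d i

section Recursion

variable {ι R : Type*} [LinearOrder ι]

lemma eq_diagonal_diag_of_isSymm_of_isUpperTriangular [Zero R] {A : Matrix ι ι R}
    (hsymm : A.IsSymm) (hupper : A.IsUpperTriangular) : A = diagonal A.diag := by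
  ext i j
  rcases lt_trichotomy i j with hij | rfl | hij
  · rw [diagonal_apply_ne _ hij.ne, ← hsymm.apply, hupper hij]
  · rw [diagonal_apply_eq, diag_apply]
  · rw [diagonal_apply_ne _ hij.ne', hupper hij]

namespace IsStrictlyLowerTriangular

variable [CommRing R] {B : Matrix ι ι R}

lemma isLowerTriangular_one_sub (hB : IsStrictlyLowerTriangular B) :
    (1 - B).IsLowerTriangular :=
  blockTriangular_one.sub fun _ _ hij => hB (OrderDual.toDual_lt_toDual.mp hij).le

lemma isUnit_one_sub [Fintype ι] (hB : IsStrictlyLowerTriangular B) : IsUnit (1 - B) := by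
  rw [isUnit_iff_isUnit_det, det_of_isLowerTriangular _ hB.isLowerTriangular_one_sub]
  simp [hB le_rfl]

end IsStrictlyLowerTriangular

variable [Fintype ι] [CommRing R] {B M : Matrix ι ι R} {d : ι → R}

namespace IsVecchiaCovariance

lemma isUpperTriangular_one_sub_mul (h : IsVecchiaCovariance B d M) :
    ((1 - B) * M).IsUpperTriangular := fun i j (hij : j < i) => by
  rw [Matrix.sub_mul, Matrix.one_mul, Matrix.sub_apply, ← h.apply_of_lt hij, sub_self]

lemma diag_one_sub_mul_mul_transpose (h : IsVecchiaCovariance B d M)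
    (hB : IsStrictlyLowerTriangular B) : ((1 - B) * M * (1 - B)ᵀ).diag = d := by
  ext i
  have hright : (M * Bᵀ) i i = (B * M * Bᵀ) i i := by
    simp only [mul_apply (N := Bᵀ), transpose_apply]
    refine Finset.sum_congr rfl fun j _ => ?_
    rcases lt_or_ge j i with hji | hij
    · rw [h.apply_of_lt hji]
    · rw [hB hij, mul_zero, mul_zero]
  have hleft : (B * M) i i = (B * M * Bᵀ) i i := by
    rw [← hright, ← transpose_apply (M * Bᵀ), transpose_mul, transpose_transpose, h.isSymm.eq]
  have hexpand : (1 - B) * M * (1 - B)ᵀ = M - B * M - M * Bᵀ + B * M * Bᵀ := by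
    rw [transpose_sub, transpose_one]
    noncomm_ring
  rw [diag_apply, hexpand, Matrix.add_apply, Matrix.sub_apply, Matrix.sub_apply, hleft, hright,
    h.apply_self]
  ring

theorem one_sub_mul_mul_transpose (h : IsVecchiaCovariance B d M)
    (hB : IsStrictlyLowerTriangular B) : (1 - B) * M * (1 - B)ᵀ = diagonal d := by
  have hsymm : ((1 - B) * M * (1 - B)ᵀ).IsSymm := by
    rw [IsSymm, transpose_mul, transpose_mul, transpose_transpose, h.isSymm.eq, Matrix.mul_assoc]
  have hupper : ((1 - B) * M * (1 - B)ᵀ).IsUpperTriangular :=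
    h.isUpperTriangular_one_sub_mul.mul hB.isLowerTriangular_one_sub.transpose
  rw [← h.diag_one_sub_mul_mul_transpose hB]
  exact eq_diagonal_diag_of_isSymm_of_isUpperTriangular hsymm hupper

theorem posDef {B M : Matrix ι ι ℝ} {d : ι → ℝ} (h : IsVecchiaCovariance B d M)
    (hB : IsStrictlyLowerTriangular B) (hd : ∀ i, 0 < d i) : M.PosDef := by
  rw [← hB.isUnit_one_sub.posDef_star_right_conjugate_iff, star_eq_conjTranspose,
    conjTranspose_eq_transpose_of_trivial, h.one_sub_mul_mul_transpose hB, posDef_diagonal_iff]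
  exact hd

theorem dotProduct_inv_mulVec {R : Type*} [Field R] {B M : Matrix ι ι R} {d : ι → R}
    (h : IsVecchiaCovariance B d M) (hB : IsStrictlyLowerTriangular B) (hd : ∀ i, d i ≠ 0)
    (f : ι → R) : f ⬝ᵥ (M⁻¹ *ᵥ f) = ∑ i, (f i - (B *ᵥ f) i) ^ 2 / d i := by
  rw [dotProduct_inv_mulVec_of_mul_mul_transpose_eq_diagonal hB.isUnit_one_sub hd
    (h.one_sub_mul_mul_transpose hB)]
  simp only [sub_mulVec, one_mulVec, Pi.sub_apply]

end IsVecchiaCovariance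

end Recursion

section Parents

variable {n : ℕ} {K : Matrix (Fin n) (Fin n) ℝ} {pa : Fin n → Finset (Fin n)}

lemma dCond_empty (K : Matrix (Fin n) (Fin n) ℝ) (i : Fin n) : dCond K ∅ i = K i i := by
  simp [dCond, dotProduct]

lemma dCond_pos {S : Finset (Fin n)} {i : Fin n} (hi : i ∉ S)
    (h : (ksub K (insert i S)).PosDef) : 0 < dCond K S i := by
  let e : {p // p ∈ S} ⊕ Unit → {p // p ∈ insert i S} :=
    Sum.elim (fun p => ⟨p.1, Finset.mem_insert_of_mem p.2⟩)
      fun _ => ⟨i, Finset.mem_insert_self i S⟩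
  have he : Function.Injective e := by
    rintro (p | _) (q | _) hpq
    · exact congrArg Sum.inl (Subtype.ext (congrArg (·.1) hpq))
    · exact absurd p.2 ((congrArg Subtype.val hpq : p.1 = i) ▸ hi)
    · exact absurd q.2 ((congrArg Subtype.val hpq : i = q.1) ▸ hi)
    · rfl
  let k : Matrix {p // p ∈ S} Unit ℝ := replicateCol Unit fun p => K p.1 i
  have hblocks : (ksub K (insert i S)).submatrix e e =
      fromBlocks (ksub K S) k kᴴ (of fun _ _ => K i i) := by
    ext (p | _) (q | _)
    · rfl
    · rfl
    · exact (h.isHermitian.apply (e (.inr ())) (e (.inl q))).symm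
    · rfl
  have hschur := posDef_schurComplement_of_posDef_fromBlocks (hblocks ▸ h.submatrix he)
  have hentry : dCond K S i =
      ((of fun _ _ => K i i) - kᴴ * (ksub K S)⁻¹ * k : Matrix Unit Unit ℝ) () () := by
    rw [Matrix.mul_assoc]
    rfl
  exact hentry ▸ hschur.diag_pos

/-- The matrix `B` of all the weights `b_i`: row `i` carries the entries of `b_i` at the parents of
`i` and zeros elsewhere, so that the recursion for `K̂` becomes a matrix identity. -/
def weightMatrix (K : Matrix (Fin n) (Fin n) ℝ) (pa : Fin n → Finset (Fin n)) :
    Matrix (Fin n) (Fin n) ℝ :=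
  of fun i j => if h : j ∈ pa i then bW K (pa i) i ⟨j, h⟩ else 0

lemma isStrictlyLowerTriangular_weightMatrix (hpa : ∀ i, ∀ j ∈ pa i, j < i) :
    IsStrictlyLowerTriangular (weightMatrix K pa) := fun i j hij =>
  dif_neg fun hj => (hpa i j hj).not_ge hij

lemma weightMatrix_dotProduct (K : Matrix (Fin n) (Fin n) ℝ) (pa : Fin n → Finset (Fin n))
    (i : Fin n) (x : Fin n → ℝ) :
    weightMatrix K pa i ⬝ᵥ x = ∑ p : {p // p ∈ pa i}, bW K (pa i) i p * x p.1 := by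
  rw [dotProduct, ← Finset.sum_subset (Finset.subset_univ (pa i)), ← Finset.sum_coe_sort]
  · exact Finset.sum_congr rfl fun p _ => by simp [weightMatrix]
  · intro j _ hj
    simp [weightMatrix, hj]

lemma weightMatrix_mul_apply (K M : Matrix (Fin n) (Fin n) ℝ) (pa : Fin n → Finset (Fin n))
    (i j : Fin n) :
    (weightMatrix K pa * M) i j = ∑ p : {p // p ∈ pa i}, bW K (pa i) i p * M p.1 j :=
  weightMatrix_dotProduct K pa i fun p => M p j

lemma weightMatrix_mul_mul_transpose_apply_self (K M : Matrix (Fin n) (Fin n) ℝ)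
    (pa : Fin n → Finset (Fin n)) (i : Fin n) :
    (weightMatrix K pa * M * (weightMatrix K pa)ᵀ) i i =
      ∑ p : {p // p ∈ pa i}, ∑ q : {p // p ∈ pa i},
        bW K (pa i) i p * bW K (pa i) i q * M p.1 q.1 := by
  have hrow (p : Fin n) : (M * (weightMatrix K pa)ᵀ) p i =
      ∑ q : {p // p ∈ pa i}, bW K (pa i) i q * M p q.1 := by
    rw [← weightMatrix_dotProduct, dotProduct_comm]
    rfl
  rw [Matrix.mul_assoc, weightMatrix_mul_apply]
  simp only [hrow, Finset.mul_sum, mul_assoc]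

lemma parents_zero_eq_empty [NeZero n] (hpa : ∀ i, ∀ j ∈ pa i, j < i) : pa 0 = ∅ :=
  Finset.eq_empty_of_forall_notMem fun j hj => (Fin.zero_le j).not_gt (hpa 0 j hj)

lemma isVecchiaCovariance_weightMatrix [NeZero n] (hpa : ∀ i, ∀ j ∈ pa i, j < i)
    {M : Matrix (Fin n) (Fin n) ℝ} (h0 : M 0 0 = K 0 0)
    (hlow : ∀ i, i ≠ 0 → ∀ j, j < i →
      M i j = ∑ p : {p // p ∈ pa i}, bW K (pa i) i p * M p.1 j)
    (hsym : ∀ i, i ≠ 0 → ∀ j, j < i → M j i = M i j)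
    (hdiag : ∀ i, i ≠ 0 → M i i = (∑ p : {p // p ∈ pa i}, ∑ q : {p // p ∈ pa i},
      bW K (pa i) i p * bW K (pa i) i q * M p.1 q.1) + dCond K (pa i) i) :
    IsVecchiaCovariance (weightMatrix K pa) (fun i => dCond K (pa i) i) M := by
  have hne {i j : Fin n} (hij : j < i) : i ≠ 0 := ((Fin.zero_le j).trans_lt hij).ne'
  refine ⟨IsSymm.ext fun i j => ?_, fun i j hij => ?_, fun i => ?_⟩
  · rcases lt_trichotomy i j with hij | rfl | hij
    · exact (hsym j (hne hij) i hij).symm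
    · rfl
    · exact hsym i (hne hij) j hij
  · rw [weightMatrix_mul_apply, hlow i (hne hij) j hij]
  · rw [weightMatrix_mul_mul_transpose_apply_self]
    rcases eq_or_ne i 0 with rfl | hi
    · rw [parents_zero_eq_empty hpa, dCond_empty, Fintype.sum_empty, zero_add, h0]
    · exact hdiag i hi

end Parents

theorem stmt18_general (n : ℕ) [NeZero n] (K : Matrix (Fin n) (Fin n) ℝ)
    (pa : Fin n → Finset (Fin n)) (hK : ∀ i : Fin n, (ksub K (insert i (pa i))).PosDef)
    (hpalt : ∀ i : Fin n, ∀ j ∈ pa i, j < i)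
    (Khat : Matrix (Fin n) (Fin n) ℝ)
    (h0 : Khat 0 0 = K 0 0)
    (hlow : ∀ i : Fin n, i ≠ 0 → ∀ j : Fin n, j < i →
      Khat i j = ∑ p : {p // p ∈ pa i}, bW K (pa i) i p * Khat p.1 j)
    (hsym : ∀ i : Fin n, i ≠ 0 → ∀ j : Fin n, j < i → Khat j i = Khat i j)
    (hdiag : ∀ i : Fin n, i ≠ 0 →
      Khat i i = (∑ p : {p // p ∈ pa i}, ∑ q : {p // p ∈ pa i},
        bW K (pa i) i p * bW K (pa i) i q * Khat p.1 q.1) + dCond K (pa i) i) :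
    (0 < K 0 0) ∧
    (∀ i : Fin n, i ≠ 0 → 0 < dCond K (pa i) i) ∧
    Khat.PosDef ∧
    ∀ f : Fin n → ℝ,
      f ⬝ᵥ (Khat⁻¹ *ᵥ f) =
        f 0 ^ 2 / K 0 0 +
          ∑ i ∈ Finset.univ.erase (0 : Fin n),
            (f i - ∑ p : {p // p ∈ pa i}, bW K (pa i) i p * f p.1) ^ 2 /
              dCond K (pa i) i := by
  have hpa0 : pa 0 = ∅ := parents_zero_eq_empty hpalt
  have hd0 : dCond K (pa 0) 0 = K 0 0 := by rw [hpa0, dCond_empty]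
  have hd (i : Fin n) : 0 < dCond K (pa i) i := dCond_pos (fun hi => (hpalt i i hi).false) (hK i)
  have hB : IsStrictlyLowerTriangular (weightMatrix K pa) :=
    isStrictlyLowerTriangular_weightMatrix hpalt
  have hKhat : IsVecchiaCovariance (weightMatrix K pa) (fun i => dCond K (pa i) i) Khat :=
    isVecchiaCovariance_weightMatrix hpalt h0 hlow hsym hdiag
  refine ⟨hd0 ▸ hd 0, fun i _ => hd i, hKhat.posDef hB hd, fun f => ?_⟩
  have hmean (i : Fin n) : (weightMatrix K pa *ᵥ f) i =
      ∑ p : {p // p ∈ pa i}, bW K (pa i) i p * f p.1 := weightMatrix_dotProduct K pa i f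
  have hmean0 : (weightMatrix K pa *ᵥ f) 0 = 0 := by rw [hmean, hpa0, Fintype.sum_empty]
  rw [hKhat.dotProduct_inv_mulVec hB fun i => (hd i).ne',
    ← Finset.add_sum_erase _ _ (Finset.mem_univ 0), hmean0, sub_zero, hd0]
  simp only [hmean]

/-- for a positive definite `K`, parent sets `pa(i) ⊆ {0,…,i−1}` (nonempty
for `i ≠ 0`), and the Vecchia covariance matrix `K̂` defined by the stated recursion, all
conditional variances are positive, `K̂` is symmetric positive definite, and
`fᵀ K̂⁻¹ f = f₀²/d₀ + Σ_{i≠0} (f_i − Σ_{p∈pa(i)} (b_i)_p f_p)²/d_i` for every `f`. -/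
theorem stmt18 (n : ℕ) [NeZero n] (K : Matrix (Fin n) (Fin n) ℝ) (hK : K.PosDef)
    (pa : Fin n → Finset (Fin n))
    (hpane : ∀ i : Fin n, i ≠ 0 → (pa i).Nonempty)
    (hpalt : ∀ i : Fin n, ∀ j ∈ pa i, j < i)
    (Khat : Matrix (Fin n) (Fin n) ℝ)
    (h0 : Khat 0 0 = K 0 0)
    (hlow : ∀ i : Fin n, i ≠ 0 → ∀ j : Fin n, j < i →
      Khat i j = ∑ p : {p // p ∈ pa i}, bW K (pa i) i p * Khat p.1 j)
    (hsym : ∀ i : Fin n, i ≠ 0 → ∀ j : Fin n, j < i → Khat j i = Khat i j)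
    (hdiag : ∀ i : Fin n, i ≠ 0 →
      Khat i i = (∑ p : {p // p ∈ pa i}, ∑ q : {p // p ∈ pa i},
        bW K (pa i) i p * bW K (pa i) i q * Khat p.1 q.1) + dCond K (pa i) i) :
    (0 < K 0 0) ∧
    (∀ i : Fin n, i ≠ 0 → 0 < dCond K (pa i) i) ∧
    Khat.PosDef ∧
    ∀ f : Fin n → ℝ,
      f ⬝ᵥ (Khat⁻¹ *ᵥ f) =
        f 0 ^ 2 / K 0 0 +
          ∑ i ∈ Finset.univ.erase (0 : Fin n),
            (f i - ∑ p : {p // p ∈ pa i}, bW K (pa i) i p * f p.1) ^ 2 /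
              dCond K (pa i) i :=
  stmt18_general n K pa (fun _ => hK.submatrix Subtype.val_injective) hpalt Khat h0 hlow hsym hdiag
end
end

section
/- Let d ≥ 1, ℓ ∈ ℕ, L ∈ (0, 1], x₀ ∈ ℝ^d, and let Q ⊂ ℝ^d be an axis-parallel cube of side length L containing x₀. Let w : ℝ^d → [0, ∞) be measurable, and let R : Q × ℝ^d → ℂ be such that: for each ξ ∈ ℝ^d the map x ↦ R(x; ξ) is ℓ-times continuously differentiable on Q; ∂^k_x R(x₀; ξ) = 0 for every multi-index k with |k| ≤ ℓ and every ξ; for every multi-index k with |k| ≤ ℓ the map (x, ξ) ↦ ∂^k_x R(x; ξ) is jointly measurable with ∫_{ℝ^d} |∂^k_x R(x; ξ)|² w(ξ) dξ < ∞ for all x ∈ Q; and M := max over multi-indices k with |k| = ℓ of sup_{x∈Q} ∫_{ℝ^d} |∂^k_x R(x; ξ)|² w(ξ) dξ is finite. Then there is a constant C > 0 depending only on d and ℓ such that for every multi-index k with |k| ≤ ℓ and every x ∈ Q: ∫_{ℝ^d} |∂^k_x R(x; ξ)|² w(ξ) dξ ≤ C L^{2(ℓ−|k|)} M. -/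
open MeasureTheory

noncomputable section

/-- Axis-parallel cube with corner `z` and side length `s`. -/
def cube (d : ℕ) (z : Fin d → ℝ) (s : ℝ) : Set (Fin d → ℝ) :=
  {y | ∀ t, z t ≤ y t ∧ y t ≤ z t + s}

/-- Partial derivative within a set `Q`, in the `j`-th coordinate, of a ℂ-valued map. -/
def pderW (d : ℕ) (Q : Set (Fin d → ℝ)) (j : Fin d) (f : (Fin d → ℝ) → ℂ) :
    (Fin d → ℝ) → ℂ :=
  fun x => fderivWithin ℝ f Q x (Pi.single j 1)

/-- Iterated partial derivative `∂^k` within `Q` associated with a multi-index `k ∈ ℕ^d`. -/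
def mderW (d : ℕ) (Q : Set (Fin d → ℝ)) (k : Fin d → ℕ) (f : (Fin d → ℝ) → ℂ) :
    (Fin d → ℝ) → ℂ :=
  (List.finRange d).foldr (fun j g => (pderW d Q j)^[k j] g) f

/-!
Descending induction on `|k|`. Along the segment from `x₀` to `x`, a `C¹` function vanishing at
`x₀` is the integral of its directional derivative, so Jensen's inequality bounds `|g x|²` by
`(d L)²` times an average of the `|∂ⱼ g|²` over the coordinates and over the segment. For
`g = ∂^k R(·; ξ)`, integrating in `ξ` and exchanging the integrals gives
`∫ |∂^k R(x; ξ)|² w(ξ) dξ ≤ (d L)² B`, where `B` bounds the same integrals for the derivatives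
`∂ⱼ ∂^k` of the next order. That these are again of the form `∂^(k + eⱼ)` is the symmetry of
second derivatives.
-/

open Set
open scoped ENNReal

section PartialDerivatives

variable {d : ℕ} {Q : Set (Fin d → ℝ)} {f g : (Fin d → ℝ) → ℂ}

lemma fderivWithin_fderivWithin_apply_comm {E F : Type*} [NormedAddCommGroup E] [NormedSpace ℝ E]
    [NormedAddCommGroup F] [NormedSpace ℝ F] {s : Set E} {f : E → F} {x : E} (hs : Convex ℝ s)
    (hne : (interior s).Nonempty) (hf : ContDiffOn ℝ 2 f s) (hx : x ∈ s) (u v : E) :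
    fderivWithin ℝ (fun y => fderivWithin ℝ f s y u) s x v =
      fderivWithin ℝ (fun y => fderivWithin ℝ f s y v) s x u := by
  have hu := uniqueDiffOn_convex hs hne
  have hdiff : DifferentiableWithinAt ℝ (fderivWithin ℝ f s) s x :=
    (hf.fderivWithin (m := 1) hu (by norm_num)).differentiableOn one_ne_zero x hx
  have hsymm : IsSymmSndFDerivWithinAt ℝ f s x := by
    refine (hf x hx).isSymmSndFDerivWithinAt (by simp) hu ?_ hx
    rw [hs.closure_interior_eq_closure_of_nonempty_interior hne]
    exact subset_closure hx
  have hsnd (a b : E) : fderivWithin ℝ (fun y => fderivWithin ℝ f s y a) s x b =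
      fderivWithin ℝ (fderivWithin ℝ f s) s x b a := by
    rw [fderivWithin_clm_apply (hu x hx) hdiff (differentiableWithinAt_const a)]
    simp
  rw [hsnd, hsnd, hsymm.eq]

lemma pderW_congr (j : Fin d) (h : EqOn f g Q) : EqOn (pderW d Q j f) (pderW d Q j g) Q :=
  fun _ hx => by simp only [pderW, fderivWithin_congr h (h hx)]

lemma pderW_comm (hQ : Convex ℝ Q) (hne : (interior Q).Nonempty) (hf : ContDiffOn ℝ 2 f Q)
    (i j : Fin d) : EqOn (pderW d Q i (pderW d Q j f)) (pderW d Q j (pderW d Q i f)) Q :=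
  fun _ hx => fderivWithin_fderivWithin_apply_comm hQ hne hf hx _ _

lemma contDiffOn_pderW (hQ : UniqueDiffOn ℝ Q) {n : ℕ} (hf : ContDiffOn ℝ (n + 1 : ℕ) f Q)
    (j : Fin d) : ContDiffOn ℝ n (pderW d Q j f) Q :=
  (hf.fderivWithin hQ (by norm_cast)).clm_apply contDiffOn_const

lemma contDiffOn_foldr_pderW (hQ : UniqueDiffOn ℝ Q) {n : ℕ} (s : List (Fin d))
    (hf : ContDiffOn ℝ (n + s.length : ℕ) f Q) :
    ContDiffOn ℝ n (s.foldr (pderW d Q) f) Q := by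
  induction s generalizing n with
  | nil => exact hf
  | cons j s ih =>
    refine contDiffOn_pderW hQ (ih ?_) j
    rwa [List.length_cons, ← add_assoc, add_right_comm] at hf

lemma foldr_pderW_eqOn_of_perm (hQ : Convex ℝ Q) (hne : (interior Q).Nonempty)
    {s t : List (Fin d)} (hst : s.Perm t) (hf : ContDiffOn ℝ s.length f Q) :
    EqOn (s.foldr (pderW d Q) f) (t.foldr (pderW d Q) f) Q := by
  induction hst with
  | nil => exact eqOn_refl _ _
  | cons j _ ih => exact pderW_congr j (ih (hf.of_le (by norm_cast; simp)))
  | swap i j s =>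
    refine pderW_comm hQ hne ?_ j i
    exact contDiffOn_foldr_pderW (n := 2) (uniqueDiffOn_convex hQ hne) s
      (by rwa [add_comm])
  | trans hst _ ih₁ ih₂ => exact (ih₁ hf).trans (ih₂ (hst.length_eq ▸ hf))

/-- The multi-index `k` as a list of coordinates in which `j` occurs `k j` times, so that `∂^k`
is the composition of the first-order partial derivatives along the list. -/
def multiIndexList (k : Fin d → ℕ) : List (Fin d) :=
  (List.finRange d).flatMap fun j => List.replicate (k j) j

lemma length_multiIndexList (k : Fin d → ℕ) : (multiIndexList k).length = ∑ j, k j := by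
  simp [multiIndexList, List.length_flatMap, ← List.ofFn_eq_map, List.sum_ofFn]

lemma count_multiIndexList (k : Fin d → ℕ) (i : Fin d) : (multiIndexList k).count i = k i := by
  simp [multiIndexList, List.count_flatMap, List.count_replicate, Function.comp_def,
    ← List.ofFn_eq_map, List.sum_ofFn]

lemma cons_multiIndexList_perm (k : Fin d → ℕ) (j : Fin d) :
    (j :: multiIndexList k).Perm (multiIndexList (k + Pi.single j 1)) := by
  refine List.perm_iff_count.2 fun i => ?_
  simp only [List.count_cons, count_multiIndexList, Pi.add_apply, Pi.single_apply, beq_iff_eq,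
    eq_comm (a := j)]

lemma mderW_eq_foldr_pderW (k : Fin d → ℕ) :
    mderW d Q k f = (multiIndexList k).foldr (pderW d Q) f := by
  rw [mderW, multiIndexList, List.foldr_flatMap]
  congr! 3 with j g
  induction k j with
  | zero => rfl
  | succ n ih => rw [Function.iterate_succ_apply', List.replicate_succ, List.foldr_cons, ih]

lemma contDiffOn_mderW (hQ : UniqueDiffOn ℝ Q) {n : ℕ} (k : Fin d → ℕ)
    (hf : ContDiffOn ℝ (n + ∑ j, k j : ℕ) f Q) : ContDiffOn ℝ n (mderW d Q k f) Q := by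
  rw [mderW_eq_foldr_pderW]
  exact contDiffOn_foldr_pderW hQ _ (by rwa [length_multiIndexList])

lemma pderW_mderW (hQ : Convex ℝ Q) (hne : (interior Q).Nonempty) (k : Fin d → ℕ)
    (hf : ContDiffOn ℝ (∑ j, k j + 1 : ℕ) f Q) (j : Fin d) :
    EqOn (pderW d Q j (mderW d Q k f)) (mderW d Q (k + Pi.single j 1) f) Q := by
  simp only [mderW_eq_foldr_pderW]
  exact foldr_pderW_eqOn_of_perm hQ hne (cons_multiIndexList_perm k j)
    (by rwa [List.length_cons, length_multiIndexList])

end PartialDerivatives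

section Segment

lemma rpow_lintegral_le_lintegral_rpow {α : Type*} [MeasurableSpace α] {μ : Measure α}
    [IsProbabilityMeasure μ] {f : α → ℝ≥0∞} (hf : AEMeasurable f μ) {p : ℝ} (hp : 1 ≤ p) :
    (∫⁻ a, f a ∂μ) ^ p ≤ ∫⁻ a, f a ^ p ∂μ := by
  have hp0 : 0 < p := zero_lt_one.trans_le hp
  have h := eLpNorm'_le_eLpNorm'_of_exponent_le zero_lt_one hp μ hf.aestronglyMeasurable
  simpa [eLpNorm', ENNReal.le_rpow_inv_iff hp0] using h

lemma enorm_map_le_enorm_mul_sum_single {ι 𝕜 E : Type*} [Fintype ι] [DecidableEq ι]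
    [NormedField 𝕜] [NormedAddCommGroup E] [NormedSpace 𝕜 E] (A : (ι → 𝕜) →ₗ[𝕜] E)
    (v : ι → 𝕜) : ‖A v‖ₑ ≤ ‖v‖ₑ * ∑ j, ‖A (Pi.single j 1)‖ₑ := by
  calc ‖A v‖ₑ = ‖∑ j, v j • A (Pi.single j 1)‖ₑ := by
        conv_lhs => rw [pi_eq_sum_univ' v, map_sum]
        simp only [map_smul]
    _ ≤ ∑ j, ‖v j‖ₑ * ‖A (Pi.single j 1)‖ₑ := by
        simpa only [enorm_smul] using enorm_sum_le Finset.univ fun j => v j • A (Pi.single j 1)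
    _ ≤ ‖v‖ₑ * ∑ j, ‖A (Pi.single j 1)‖ₑ := by
        rw [Finset.mul_sum]
        gcongr with j
        exact enorm_le_iff_norm_le.2 (norm_le_pi_norm v j)

lemma enorm_sub_le_lintegral_fderivWithin_lineMap {E F : Type*} [NormedAddCommGroup E]
    [NormedSpace ℝ E] [NormedAddCommGroup F] [NormedSpace ℝ F] {s : Set E} {f : E → F}
    {x y : E} (hs : Convex ℝ s) (hf : ContDiffOn ℝ 1 f s) (hx : x ∈ s) (hy : y ∈ s) :
    ‖f y - f x‖ₑ ≤
      ∫⁻ t in Icc (0 : ℝ) 1, ‖fderivWithin ℝ f s (AffineMap.lineMap x y t) (y - x)‖ₑ := by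
  have hmaps : MapsTo (AffineMap.lineMap x y : ℝ → E) (Icc 0 1) s :=
    fun t ht => hs.lineMap_mem hx hy ht
  have hderiv : ∀ t ∈ Icc (0 : ℝ) 1,
      derivWithin (f ∘ AffineMap.lineMap x y) (Icc 0 1) t =
        fderivWithin ℝ f s (AffineMap.lineMap x y t) (y - x) := fun t ht =>
    ((hf.differentiableOn one_ne_zero _ (hmaps ht)).hasFDerivWithinAt.comp_hasDerivWithinAt t
      AffineMap.hasDerivWithinAt_lineMap hmaps).derivWithin (uniqueDiffOn_Icc one_pos t ht)
  have hcomp : ContDiffOn ℝ 1 (f ∘ AffineMap.lineMap x y) (Icc (0 : ℝ) 1) :=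
    hf.comp (AffineMap.contDiff_lineMap x y).contDiffOn hmaps
  have hftc := enorm_sub_le_lintegral_derivWithin_Icc_of_contDiffOn_Icc hcomp zero_le_one
  rw [setLIntegral_congr_fun measurableSet_Icc fun t ht => by rw [hderiv t ht]] at hftc
  simpa using hftc

lemma enorm_sub_rpow_le_lintegral_pderW {d : ℕ} {Q : Set (Fin d → ℝ)}
    {g : (Fin d → ℝ) → ℂ} {x₀ x : Fin d → ℝ} (hQ : Convex ℝ Q) (hne : (interior Q).Nonempty)
    (hg : ContDiffOn ℝ 1 g Q) (hx₀ : x₀ ∈ Q) (hx : x ∈ Q) {p : ℝ} (hp : 1 ≤ p) :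
    ‖g x - g x₀‖ₑ ^ p ≤ ‖x - x₀‖ₑ ^ p * d ^ (p - 1) * ∫⁻ t in Icc (0 : ℝ) 1,
      ∑ j, ‖pderW d Q j g (AffineMap.lineMap x₀ x t)‖ₑ ^ p := by
  have hu := uniqueDiffOn_convex hQ hne
  have hp0 : 0 ≤ p := zero_le_one.trans hp
  have : IsProbabilityMeasure (volume.restrict (Icc (0 : ℝ) 1)) := ⟨by simp⟩
  have hcont : ContinuousOn
      (fun t : ℝ => fderivWithin ℝ g Q (AffineMap.lineMap x₀ x t) (x - x₀)) (Icc 0 1) :=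
    ((hg.continuousOn_fderivWithin hu le_rfl).comp AffineMap.lineMap_continuous.continuousOn
      fun t ht => hQ.lineMap_mem hx₀ hx ht).clm_apply continuousOn_const
  calc ‖g x - g x₀‖ₑ ^ p
      ≤ (∫⁻ t in Icc (0 : ℝ) 1,
          ‖fderivWithin ℝ g Q (AffineMap.lineMap x₀ x t) (x - x₀)‖ₑ) ^ p := by
        gcongr
        exact enorm_sub_le_lintegral_fderivWithin_lineMap hQ hg hx₀ hx
    _ ≤ ∫⁻ t in Icc (0 : ℝ) 1,
          ‖fderivWithin ℝ g Q (AffineMap.lineMap x₀ x t) (x - x₀)‖ₑ ^ p :=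
        rpow_lintegral_le_lintegral_rpow (hcont.aemeasurable measurableSet_Icc).enorm hp
    _ ≤ ∫⁻ t in Icc (0 : ℝ) 1, ‖x - x₀‖ₑ ^ p * d ^ (p - 1) *
          ∑ j, ‖pderW d Q j g (AffineMap.lineMap x₀ x t)‖ₑ ^ p := by
        gcongr with t
        calc _ ≤ (‖x - x₀‖ₑ * ∑ j, ‖pderW d Q j g (AffineMap.lineMap x₀ x t)‖ₑ) ^ p := by
              gcongr
              exact enorm_map_le_enorm_mul_sum_single (fderivWithin ℝ g Q _).toLinearMap _
          _ ≤ _ := by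
              rw [ENNReal.mul_rpow_of_nonneg _ _ hp0, mul_assoc]
              gcongr
              simpa using ENNReal.rpow_sum_le_const_mul_sum_rpow Finset.univ
                (fun j => ‖pderW d Q j g (AffineMap.lineMap x₀ x t)‖ₑ) hp
    _ = _ := lintegral_const_mul' _ _ (by finiteness)

end Segment

section ParametricBounds

variable {d : ℕ} {Q : Set (Fin d → ℝ)} {x₀ x : Fin d → ℝ} {Ω : Type*} [MeasurableSpace Ω]
  {μ : Measure Ω}

lemma lintegral_enorm_rpow_le_of_pderW_le [SFinite μ] {G : (Fin d → ℝ) → Ω → ℂ}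
    {D : Fin d → (Fin d → ℝ) → Ω → ℂ} {p : ℝ} {B : ℝ≥0∞} (hQ : Convex ℝ Q)
    (hne : (interior Q).Nonempty) (hp : 1 ≤ p)
    (hG : ∀ ξ, ContDiffOn ℝ 1 (fun y => G y ξ) Q) (hx₀ : x₀ ∈ Q) (hG₀ : ∀ ξ, G x₀ ξ = 0)
    (hGD : ∀ j ξ, EqOn (pderW d Q j fun y => G y ξ) (fun y => D j y ξ) Q)
    (hD : ∀ j, Measurable fun q : (Fin d → ℝ) × Ω => D j q.1 q.2)
    (hB : ∀ j, ∀ y ∈ Q, ∫⁻ ξ, ‖D j y ξ‖ₑ ^ p ∂μ ≤ B) (hx : x ∈ Q) :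
    ∫⁻ ξ, ‖G x ξ‖ₑ ^ p ∂μ ≤ (d * ‖x - x₀‖ₑ) ^ p * B := by
  set γ := AffineMap.lineMap (k := ℝ) x₀ x
  have hγQ : ∀ t ∈ Icc (0 : ℝ) 1, γ t ∈ Q := fun t ht => hQ.lineMap_mem hx₀ hx ht
  have hγm : Measurable γ := AffineMap.lineMap_continuous.measurable
  have hpt (ξ : Ω) : ‖G x ξ‖ₑ ^ p ≤ ‖x - x₀‖ₑ ^ p * d ^ (p - 1) *
      ∫⁻ t in Icc (0 : ℝ) 1, ∑ j, ‖D j (γ t) ξ‖ₑ ^ p := by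
    have h := enorm_sub_rpow_le_lintegral_pderW hQ hne (hG ξ) hx₀ hx hp
    rw [hG₀, sub_zero] at h
    refine h.trans_eq (congrArg _ (setLIntegral_congr_fun measurableSet_Icc fun t ht => ?_))
    exact Finset.sum_congr rfl fun j _ => by rw [hGD j ξ (hγQ t ht)]
  have hslice (t : ℝ) (ht : t ∈ Icc (0 : ℝ) 1) :
      ∫⁻ ξ, ∑ j, ‖D j (γ t) ξ‖ₑ ^ p ∂μ ≤ d * B := by
    rw [lintegral_finsetSum _ fun j _ => by fun_prop]
    simpa using Finset.sum_le_card_nsmul Finset.univ _ B fun j _ => hB j _ (hγQ t ht)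
  have hconst : (d : ℝ≥0∞) ^ (p - 1) * d = d ^ p := by
    calc (d : ℝ≥0∞) ^ (p - 1) * d = d ^ (p - 1) * d ^ (1 : ℝ) := by rw [ENNReal.rpow_one]
      _ = d ^ p := by
        rw [← ENNReal.rpow_add_of_nonneg _ _ (sub_nonneg.2 hp) zero_le_one, sub_add_cancel]
  calc ∫⁻ ξ, ‖G x ξ‖ₑ ^ p ∂μ
      ≤ ∫⁻ ξ, ‖x - x₀‖ₑ ^ p * d ^ (p - 1) *
          (∫⁻ t in Icc (0 : ℝ) 1, ∑ j, ‖D j (γ t) ξ‖ₑ ^ p) ∂μ := lintegral_mono hpt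
    _ = ‖x - x₀‖ₑ ^ p * d ^ (p - 1) *
          ∫⁻ t in Icc (0 : ℝ) 1, (∫⁻ ξ, ∑ j, ‖D j (γ t) ξ‖ₑ ^ p ∂μ) := by
        rw [lintegral_const_mul' _ _ (by finiteness), lintegral_lintegral_swap]
        fun_prop
    _ ≤ ‖x - x₀‖ₑ ^ p * d ^ (p - 1) * ∫⁻ _ in Icc (0 : ℝ) 1, d * B := by
        gcongr _ * ?_
        exact setLIntegral_mono measurable_const hslice
    _ = (d * ‖x - x₀‖ₑ) ^ p * B := by
        rw [setLIntegral_const, Real.volume_Icc, sub_zero, ENNReal.ofReal_one, mul_one,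
          ENNReal.mul_rpow_of_nonneg _ _ (zero_le_one.trans hp), ← hconst]
        ring

theorem lintegral_enorm_mderW_rpow_le [SFinite μ] {ℓ : ℕ} {p : ℝ} {L M : ℝ≥0∞}
    {R : (Fin d → ℝ) → Ω → ℂ} (hQ : Convex ℝ Q) (hne : (interior Q).Nonempty) (hp : 1 ≤ p)
    (hx₀ : x₀ ∈ Q) (hL : ∀ x ∈ Q, ‖x - x₀‖ₑ ≤ L) (hR : ∀ ξ, ContDiffOn ℝ ℓ (fun x => R x ξ) Q)
    (hR₀ : ∀ k : Fin d → ℕ, ∑ j, k j < ℓ → ∀ ξ, mderW d Q k (fun x => R x ξ) x₀ = 0)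
    (hmeas : ∀ k : Fin d → ℕ, ∑ j, k j ≤ ℓ →
      Measurable fun q : (Fin d → ℝ) × Ω => mderW d Q k (fun x => R x q.2) q.1)
    (hM : ∀ k : Fin d → ℕ, ∑ j, k j = ℓ → ∀ x ∈ Q,
      ∫⁻ ξ, ‖mderW d Q k (fun y => R y ξ) x‖ₑ ^ p ∂μ ≤ M)
    {k : Fin d → ℕ} (hk : ∑ j, k j ≤ ℓ) (hx : x ∈ Q) :
    ∫⁻ ξ, ‖mderW d Q k (fun y => R y ξ) x‖ₑ ^ p ∂μ ≤ ((d * L) ^ p) ^ (ℓ - ∑ j, k j) * M := by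
  obtain ⟨n, hn⟩ := Nat.exists_eq_add_of_le hk
  rw [hn, Nat.add_sub_cancel_left]
  clear hk
  induction n generalizing k x with
  | zero => simpa using hM k hn.symm x hx
  | succ n ih =>
    have hsum (j : Fin d) : ∑ i, (k + Pi.single j 1 : Fin d → ℕ) i = ∑ i, k i + 1 := by
      simp [Finset.sum_add_distrib]
    have hsmooth (ξ : Ω) : ContDiffOn ℝ (∑ j, k j + 1 : ℕ) (fun y => R y ξ) Q :=
      (hR ξ).of_le (by norm_cast; omega)
    calc ∫⁻ ξ, ‖mderW d Q k (fun y => R y ξ) x‖ₑ ^ p ∂μ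
        ≤ (d * ‖x - x₀‖ₑ) ^ p * (((d * L) ^ p) ^ n * M) :=
          lintegral_enorm_rpow_le_of_pderW_le
            (G := fun y ξ => mderW d Q k (fun y => R y ξ) y)
            (D := fun j y ξ => mderW d Q (k + Pi.single j 1) (fun y => R y ξ) y) hQ hne hp
            (fun ξ => mod_cast contDiffOn_mderW (n := 1) (uniqueDiffOn_convex hQ hne) k
              (by rw [add_comm]; exact hsmooth ξ))
            hx₀ (hR₀ k (by omega)) (fun j ξ => pderW_mderW hQ hne k (hsmooth ξ) j)
            (fun j => hmeas _ (by rw [hsum]; omega))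
            (fun j y hy => ih hy (by rw [hsum]; omega)) hx
      _ ≤ (d * L) ^ p * (((d * L) ^ p) ^ n * M) := by
          gcongr
          exact hL x hx
      _ = ((d * L) ^ p) ^ (n + 1) * M := by ring

end ParametricBounds

section WeightedIntegrals

variable {Ω : Type*} [MeasurableSpace Ω] {μ : Measure Ω}

lemma integrable_and_integral_le_iff_lintegral_le {F : Ω → ℝ} {c : ℝ}
    (hF : AEStronglyMeasurable F μ) (hF0 : 0 ≤ᵐ[μ] F) (hc : 0 ≤ c) :
    (Integrable F μ ∧ ∫ ξ, F ξ ∂μ ≤ c) ↔ ∫⁻ ξ, ENNReal.ofReal (F ξ) ∂μ ≤ ENNReal.ofReal c := by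
  have hle (hi : Integrable F μ) : ∫ ξ, F ξ ∂μ ≤ c ↔
      ∫⁻ ξ, ENNReal.ofReal (F ξ) ∂μ ≤ ENNReal.ofReal c := by
    rw [← ofReal_integral_eq_lintegral_ofReal hi hF0, ENNReal.ofReal_le_ofReal_iff hc]
  refine ⟨fun ⟨hi, h⟩ => (hle hi).1 h, fun h => ?_⟩
  have hi : Integrable F μ :=
    ⟨hF, (hasFiniteIntegral_iff_ofReal hF0).2 (h.trans_lt ENNReal.ofReal_lt_top)⟩
  exact ⟨hi, (hle hi).2 h⟩

lemma integrable_and_integral_norm_sq_mul_le_iff {E : Type*} [NormedAddCommGroup E]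
    [MeasurableSpace E] [OpensMeasurableSpace E] {f : Ω → E} {w : Ω → ℝ} {c : ℝ}
    (hf : Measurable f) (hw : Measurable w) (hw0 : ∀ ξ, 0 ≤ w ξ) (hc : 0 ≤ c) :
    (Integrable (fun ξ => ‖f ξ‖ ^ 2 * w ξ) μ ∧ ∫ ξ, ‖f ξ‖ ^ 2 * w ξ ∂μ ≤ c) ↔
      ∫⁻ ξ, ‖f ξ‖ₑ ^ (2 : ℝ) ∂μ.withDensity (fun ξ => ENNReal.ofReal (w ξ)) ≤
        ENNReal.ofReal c := by
  have hdensity : ∫⁻ ξ, ‖f ξ‖ₑ ^ (2 : ℝ) ∂μ.withDensity (fun ξ => ENNReal.ofReal (w ξ)) =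
      ∫⁻ ξ, ENNReal.ofReal (‖f ξ‖ ^ 2 * w ξ) ∂μ := by
    rw [lintegral_withDensity_eq_lintegral_mul _ (by fun_prop) (by fun_prop)]
    refine lintegral_congr fun ξ => ?_
    rw [Pi.mul_apply, mul_comm, ENNReal.ofReal_mul (sq_nonneg _),
      ENNReal.ofReal_pow (norm_nonneg _), ofReal_norm, ENNReal.rpow_two]
  rw [hdensity]
  exact integrable_and_integral_le_iff_lintegral_le (by fun_prop)
    (.of_forall fun ξ => mul_nonneg (sq_nonneg _) (hw0 ξ)) hc

end WeightedIntegrals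

section Cube

variable {d : ℕ} {z x₀ : Fin d → ℝ} {s : ℝ}

lemma cube_eq_Icc : cube d z s = Icc z (fun t => z t + s) := by
  ext y
  simp [cube, Pi.le_def, forall_and]

lemma convex_cube : Convex ℝ (cube d z s) := by
  rw [cube_eq_Icc]
  exact convex_Icc _ _

lemma nonempty_interior_cube (hs : 0 < s) : (interior (cube d z s)).Nonempty := by
  rw [cube_eq_Icc, ← pi_univ_Icc, interior_pi_set finite_univ]
  refine ⟨fun t => z t + s / 2, fun t _ => ?_⟩
  simp only [interior_Icc]
  constructor <;> linarith

lemma cube_subset_closedBall (hs : 0 ≤ s) (hx₀ : x₀ ∈ cube d z s) :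
    cube d z s ⊆ Metric.closedBall x₀ s := fun x hx =>
  (dist_pi_le_iff hs).2 fun t => abs_le.2
    ⟨by linarith [(hx t).1, (hx₀ t).2], by linarith [(hx t).2, (hx₀ t).1]⟩

end Cube

theorem stmt19_general {d : ℕ} (hd : 1 ≤ d) {ℓ : ℕ} {Q : Set (Fin d → ℝ)} (hQ : Convex ℝ Q)
    (hne : (interior Q).Nonempty) {x₀ : Fin d → ℝ} (hx₀ : x₀ ∈ Q) {L : ℝ}
    (hL : Q ⊆ Metric.closedBall x₀ L) {Ω : Type*} [MeasurableSpace Ω] {μ : Measure Ω} [SFinite μ]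
    {w : Ω → ℝ} (hw : Measurable w) (hw0 : ∀ ξ, 0 ≤ w ξ) {R : (Fin d → ℝ) → Ω → ℂ}
    (hR : ∀ ξ, ContDiffOn ℝ ℓ (fun x => R x ξ) Q)
    (hR₀ : ∀ k : Fin d → ℕ, ∑ j, k j < ℓ → ∀ ξ, mderW d Q k (fun x => R x ξ) x₀ = 0)
    (hmeas : ∀ k : Fin d → ℕ, ∑ j, k j ≤ ℓ →
      Measurable fun q : (Fin d → ℝ) × Ω => mderW d Q k (fun x => R x q.2) q.1)
    (hint : ∀ k : Fin d → ℕ, ∑ j, k j = ℓ → ∀ x ∈ Q,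
      Integrable (fun ξ => ‖mderW d Q k (fun y => R y ξ) x‖ ^ 2 * w ξ) μ)
    {M : ℝ} (hM : ∀ k : Fin d → ℕ, ∑ j, k j = ℓ → ∀ x ∈ Q,
      ∫ ξ, ‖mderW d Q k (fun y => R y ξ) x‖ ^ 2 * w ξ ∂μ ≤ M)
    {k : Fin d → ℕ} (hk : ∑ j, k j ≤ ℓ) {x : Fin d → ℝ} (hx : x ∈ Q) :
    Integrable (fun ξ => ‖mderW d Q k (fun y => R y ξ) x‖ ^ 2 * w ξ) μ ∧
      ∫ ξ, ‖mderW d Q k (fun y => R y ξ) x‖ ^ 2 * w ξ ∂μ ≤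
        d ^ (2 * ℓ) * L ^ (2 * (ℓ - ∑ j, k j)) * M := by
  have hd1 : (1 : ℝ) ≤ d := mod_cast hd
  have hL0 : 0 ≤ L := dist_nonneg.trans (hL hx₀)
  have hM0 : 0 ≤ M := (integral_nonneg fun ξ => mul_nonneg (sq_nonneg _) (hw0 ξ)).trans
    (hM (Pi.single ⟨0, hd⟩ ℓ) (by simp) x₀ hx₀)
  have hslice (k : Fin d → ℕ) (hk : ∑ j, k j ≤ ℓ) (x : Fin d → ℝ) :
      Measurable fun ξ => mderW d Q k (fun y => R y ξ) x :=
    (hmeas k hk).comp measurable_prodMk_left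
  rw [integrable_and_integral_norm_sq_mul_le_iff (hslice k hk x) hw hw0 (by positivity)]
  refine (lintegral_enorm_mderW_rpow_le (L := ENNReal.ofReal L) hQ hne one_le_two hx₀
    (fun y hy => ?_) hR hR₀ hmeas (fun k hk x hx => (integrable_and_integral_norm_sq_mul_le_iff
      (hslice k hk.le x) hw hw0 hM0).1 ⟨hint k hk x hx, hM k hk x hx⟩) hk hx).trans ?_
  · rw [← ofReal_norm, ← dist_eq_norm]
    exact ENNReal.ofReal_le_ofReal (hL hy)
  · rw [ENNReal.rpow_two, ← pow_mul, ← ENNReal.ofReal_natCast, ← ENNReal.ofReal_mul (by positivity),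
      ← ENNReal.ofReal_pow (by positivity), ← ENNReal.ofReal_mul (by positivity), mul_pow]
    gcongr
    omega

/-- if `R(·;ξ)` is `ℓ`-times continuously differentiable on a cube `Q` of
side length `L ∈ (0,1]`, all its partials of order `≤ ℓ` vanish at `x₀ ∈ Q`, and the weighted
`L²(w)`-norms of the order-`ℓ` partials are uniformly bounded by `M` on `Q`, then for every
`|k| ≤ ℓ` and `x ∈ Q`, `∫ |∂^k R(x;ξ)|² w(ξ) dξ ≤ C L^{2(ℓ−|k|)} M` with `C = C(d,ℓ)`. -/
theorem stmt19 (d : ℕ) (hd : 1 ≤ d) (ℓ : ℕ) :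
    ∃ C : ℝ, 0 < C ∧
      ∀ L : ℝ, 0 < L → L ≤ 1 →
      ∀ z x₀ : Fin d → ℝ, x₀ ∈ cube d z L →
      ∀ wgt : (Fin d → ℝ) → ℝ, Measurable wgt → (∀ ξ, 0 ≤ wgt ξ) →
      ∀ R : (Fin d → ℝ) → (Fin d → ℝ) → ℂ,
        (∀ ξ : Fin d → ℝ, ContDiffOn ℝ ((ℓ : ℕ) : ℕ∞) (fun x => R x ξ) (cube d z L)) →
        (∀ k : Fin d → ℕ, (∑ j, k j) ≤ ℓ → ∀ ξ : Fin d → ℝ,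
          mderW d (cube d z L) k (fun x => R x ξ) x₀ = 0) →
        (∀ k : Fin d → ℕ, (∑ j, k j) ≤ ℓ →
          Measurable (fun p : (Fin d → ℝ) × (Fin d → ℝ) =>
            mderW d (cube d z L) k (fun x => R x p.2) p.1) ∧
          ∀ x ∈ cube d z L,
            Integrable (fun ξ : Fin d → ℝ =>
              ‖mderW d (cube d z L) k (fun x' => R x' ξ) x‖ ^ 2 * wgt ξ)) →
        ∀ M : ℝ,
          (∀ k : Fin d → ℕ, (∑ j, k j) = ℓ → ∀ x ∈ cube d z L,
            (∫ ξ : Fin d → ℝ,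
              ‖mderW d (cube d z L) k (fun x' => R x' ξ) x‖ ^ 2 * wgt ξ) ≤ M) →
        ∀ k : Fin d → ℕ, (∑ j, k j) ≤ ℓ → ∀ x ∈ cube d z L,
          (∫ ξ : Fin d → ℝ,
              ‖mderW d (cube d z L) k (fun x' => R x' ξ) x‖ ^ 2 * wgt ξ) ≤
            C * L ^ (2 * (ℓ - ∑ j, k j)) * M := by
  refine ⟨d ^ (2 * ℓ), by positivity,
    fun L hL _ z x₀ hx₀ w hw hw0 R hR hR₀ hint M hM k hk x hx => ?_⟩
  exact (stmt19_general hd convex_cube (nonempty_interior_cube hL) hx₀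
    (cube_subset_closedBall hL.le hx₀) hw hw0 hR (fun k hk => hR₀ k hk.le)
    (fun k hk => (hint k hk).1) (fun k hk => (hint k hk.le).2) hM hk hx).2
end
end
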